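/- For every θ* ∈ M and every t ≥ 0, the expected supremum of the Gaussian process satisfies E[ sup over θ ∈ B(θ*, t) of ⟨ε, θ − θ*⟩ ] ≤ ( t + sqrt( n V(θ*) ) ) · E[ sup over θ ∈ B(0,1) of ⟨ε, θ⟩ ], where ε is a matrix with i.i.d. N(0,σ²) entries and ⟨A, B⟩ = Σ_{i,j} A_{ij} B_{ij}. -/

import Mathlib

open MeasureTheory ProbabilityTheory

noncomputable section

/-- The set of isotonic (coordinatewise nondecreasing) `n1 × n2` matrices. -/
def Isotonic {n1 n2 : ℕ} (θ : Fin n1 → Fin n2 → ℝ) : Prop :=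
  ∀ ⦃i k : Fin n1⦄ ⦃j l : Fin n2⦄, i ≤ k → j ≤ l → θ i j ≤ θ k l

/-- Squared Frobenius norm of a matrix. -/
def frobSq {n1 n2 : ℕ} (θ : Fin n1 → Fin n2 → ℝ) : ℝ :=
  ∑ i, ∑ j, θ i j ^ 2

/-- The law of an `n1 × n2` matrix with i.i.d. `N(0, σ²)` entries. -/
def noiseMeasure (n1 n2 : ℕ) (σ : ℝ) : Measure (Fin n1 → Fin n2 → ℝ) :=
  Measure.pi fun _ => Measure.pi fun _ => gaussianReal 0 ⟨σ ^ 2, sq_nonneg σ⟩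

/-- `lse` is the least squares estimator: for every data matrix `y`, `lse y` minimizes
the squared Frobenius distance to `y` over the cone of isotonic matrices. -/
def IsLSE {n1 n2 : ℕ} (lse : (Fin n1 → Fin n2 → ℝ) → Fin n1 → Fin n2 → ℝ) : Prop :=
  ∀ y, Isotonic (lse y) ∧ ∀ θ, Isotonic θ → frobSq (y - lse y) ≤ frobSq (y - θ)

/-- The risk `R(θ*, est) = E ‖est(θ* + ε) − θ*‖² / n`, where `ε` has i.i.d. `N(0,σ²)`
entries and `n = n1 n2`. -/
def risk {n1 n2 : ℕ} (σ : ℝ) (θstar : Fin n1 → Fin n2 → ℝ)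
    (est : (Fin n1 → Fin n2 → ℝ) → Fin n1 → Fin n2 → ℝ) : ℝ :=
  (∫ ε, frobSq (est (θstar + ε) - θstar) ∂noiseMeasure n1 n2 σ) / (n1 * n2)

/-- The trace inner product `⟨a, b⟩ = Σ_{i,j} a_{ij} b_{ij}`. -/
def ip {n1 n2 : ℕ} (a b : Fin n1 → Fin n2 → ℝ) : ℝ := ∑ i, ∑ j, a i j * b i j

/-- The variance `V(θ) = (1/n) Σ_{i,j} (θ_{ij} − θ̄)²` of the entries of `θ`. -/
def matVar {n1 n2 : ℕ} (θ : Fin n1 → Fin n2 → ℝ) : ℝ :=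
  (∑ i, ∑ j, (θ i j - (∑ i, ∑ j, θ i j) / (n1 * n2)) ^ 2) / (n1 * n2)

section

variable {n1 n2 : ℕ}

lemma frobSq_nonneg (θ : Fin n1 → Fin n2 → ℝ) : 0 ≤ frobSq θ :=
  Finset.sum_nonneg fun _ _ => Finset.sum_nonneg fun _ _ => sq_nonneg _

lemma sq_apply_le_frobSq (θ : Fin n1 → Fin n2 → ℝ) (i : Fin n1) (j : Fin n2) :
    θ i j ^ 2 ≤ frobSq θ :=
  (Finset.single_le_sum (f := fun j => θ i j ^ 2) (fun _ _ => sq_nonneg _)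
    (Finset.mem_univ j)).trans
    (Finset.single_le_sum (f := fun i => ∑ j, θ i j ^ 2)
      (fun _ _ => Finset.sum_nonneg fun _ _ => sq_nonneg _) (Finset.mem_univ i))

/-- Cauchy–Schwarz for the trace inner product. -/
lemma ip_le_sqrt_mul_sqrt (a b : Fin n1 → Fin n2 → ℝ) :
    ip a b ≤ √(frobSq a) * √(frobSq b) := by
  have h := Real.sum_mul_le_sqrt_mul_sqrt (Finset.univ : Finset (Fin n1 × Fin n2))
    (fun p => a p.1 p.2) (fun p => b p.1 p.2)
  simpa only [ip, frobSq, Fintype.sum_prod_type] using h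

lemma frobSq_add (a b : Fin n1 → Fin n2 → ℝ) :
    frobSq (a + b) = frobSq a + 2 * ip a b + frobSq b := by
  simp only [frobSq, ip, Finset.mul_sum, ← Finset.sum_add_distrib, Pi.add_apply]
  exact Finset.sum_congr rfl fun i _ => Finset.sum_congr rfl fun j _ => by ring

lemma frobSq_smul (r : ℝ) (a : Fin n1 → Fin n2 → ℝ) :
    frobSq (r • a) = r ^ 2 * frobSq a := by
  simp only [frobSq, Finset.mul_sum, Pi.smul_apply, smul_eq_mul, mul_pow]

lemma frobSq_add_le {a b : Fin n1 → Fin n2 → ℝ} {r s : ℝ} (hr : 0 ≤ r) (hs : 0 ≤ s)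
    (ha : frobSq a ≤ r ^ 2) (hb : frobSq b ≤ s ^ 2) : frobSq (a + b) ≤ (r + s) ^ 2 := by
  have h : ip a b ≤ r * s := (ip_le_sqrt_mul_sqrt a b).trans <|
    mul_le_mul (Real.sqrt_le_iff.2 ⟨hr, ha⟩) (Real.sqrt_le_iff.2 ⟨hs, hb⟩)
      (Real.sqrt_nonneg _) hr
  rw [frobSq_add]
  nlinarith

lemma ip_sub (ε a b : Fin n1 → Fin n2 → ℝ) : ip ε (a - b) = ip ε a - ip ε b := by
  simp only [ip, ← Finset.sum_sub_distrib, Pi.sub_apply, mul_sub]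

lemma ip_smul (ε a : Fin n1 → Fin n2 → ℝ) (r : ℝ) : ip ε (r • a) = r * ip ε a := by
  simp only [ip, Finset.mul_sum, Pi.smul_apply, smul_eq_mul]
  exact Finset.sum_congr rfl fun i _ => Finset.sum_congr rfl fun j _ => by ring

lemma ip_le_sum_abs {a : Fin n1 → Fin n2 → ℝ} (ha : frobSq a ≤ 1)
    (ε : Fin n1 → Fin n2 → ℝ) : ip ε a ≤ ∑ i, ∑ j, |ε i j| := by
  refine Finset.sum_le_sum fun i _ => Finset.sum_le_sum fun j _ => ?_
  have h : |a i j| ≤ 1 := (sq_le_one_iff_abs_le_one _).1 ((sq_apply_le_frobSq a i j).trans ha)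
  calc ε i j * a i j ≤ |ε i j| * |a i j| := by rw [← abs_mul]; exact le_abs_self _
    _ ≤ |ε i j| := mul_le_of_le_one_right (abs_nonneg _) h

/-- The support function of the isotonic matrices in the unit Frobenius ball. -/
def isotonicSupport (ε : Fin n1 → Fin n2 → ℝ) : ℝ :=
  ⨆ θ : {θ : Fin n1 → Fin n2 → ℝ // Isotonic θ ∧ frobSq θ ≤ 1}, ip ε θ.1

lemma bddAbove_range_ip (ε : Fin n1 → Fin n2 → ℝ) :
    BddAbove (Set.range fun θ : {θ : Fin n1 → Fin n2 → ℝ // Isotonic θ ∧ frobSq θ ≤ 1} =>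
      ip ε θ.1) :=
  ⟨_, Set.forall_mem_range.2 fun θ => ip_le_sum_abs θ.2.2 ε⟩

lemma isotonic_zero : Isotonic (0 : Fin n1 → Fin n2 → ℝ) := fun _ _ _ _ _ _ => le_rfl

lemma frobSq_zero : frobSq (0 : Fin n1 → Fin n2 → ℝ) = 0 := by simp [frobSq]

lemma ip_zero (ε : Fin n1 → Fin n2 → ℝ) : ip ε 0 = 0 := by simp [ip]

lemma ip_le_isotonicSupport {a : Fin n1 → Fin n2 → ℝ} (ha : Isotonic a) (h : frobSq a ≤ 1)
    (ε : Fin n1 → Fin n2 → ℝ) : ip ε a ≤ isotonicSupport ε :=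
  le_ciSup (bddAbove_range_ip ε) ⟨a, ha, h⟩

lemma isotonicSupport_nonneg (ε : Fin n1 → Fin n2 → ℝ) : 0 ≤ isotonicSupport ε := by
  simpa only [ip_zero] using
    ip_le_isotonicSupport isotonic_zero (frobSq_zero.trans_le zero_le_one) ε

lemma isotonicSupport_le_sum_abs (ε : Fin n1 → Fin n2 → ℝ) :
    isotonicSupport ε ≤ ∑ i, ∑ j, |ε i j| :=
  have : Nonempty {θ : Fin n1 → Fin n2 → ℝ // Isotonic θ ∧ frobSq θ ≤ 1} :=
    ⟨0, isotonic_zero, frobSq_zero.trans_le zero_le_one⟩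
  ciSup_le fun θ => ip_le_sum_abs θ.2.2 ε

/-- Isotonic matrices form a cone, so the bound scales with the radius of the ball. -/
lemma ip_le_mul_isotonicSupport {a : Fin n1 → Fin n2 → ℝ} (ha : Isotonic a) {r : ℝ}
    (hr : 0 ≤ r) (h : frobSq a ≤ r ^ 2) (ε : Fin n1 → Fin n2 → ℝ) :
    ip ε a ≤ r * isotonicSupport ε := by
  rcases hr.eq_or_lt with rfl | hr
  · have ha0 : a = 0 := by
      ext i j
      have := (sq_apply_le_frobSq a i j).trans h
      exact pow_eq_zero_iff two_ne_zero |>.1 (le_antisymm (by simpa using this) (sq_nonneg _))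
    simp [ha0, ip_zero]
  · have h1 : ip ε (r⁻¹ • a) ≤ isotonicSupport ε := by
      refine ip_le_isotonicSupport (fun i k j l hik hjl => ?_) ?_ ε
      · exact mul_le_mul_of_nonneg_left (ha hik hjl) (inv_nonneg.2 hr.le)
      · rw [frobSq_smul, inv_pow, inv_mul_le_iff₀ (by positivity), mul_one]
        exact h
    rwa [ip_smul, inv_mul_le_iff₀ hr] at h1

lemma measurable_isotonicSupport :
    Measurable (isotonicSupport : (Fin n1 → Fin n2 → ℝ) → ℝ) := by
  refine LowerSemicontinuous.measurable (lowerSemicontinuous_ciSup bddAbove_range_ip fun θ => ?_)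
  exact Continuous.lowerSemicontinuous (by unfold ip; fun_prop)

lemma noiseMeasure_eq_pi (σ : ℝ) : noiseMeasure n1 n2 σ =
    Measure.pi fun _ => Measure.pi fun _ => gaussianReal 0 (σ ^ 2).toNNReal := by
  rw [Real.toNNReal_of_nonneg (sq_nonneg σ)]
  rfl

lemma measurePreserving_noise_apply (σ : ℝ) (i : Fin n1) (j : Fin n2) :
    MeasurePreserving (fun ε : Fin n1 → Fin n2 → ℝ => ε i j) (noiseMeasure n1 n2 σ)
      (gaussianReal 0 (σ ^ 2).toNNReal) := by
  rw [noiseMeasure_eq_pi]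
  exact (measurePreserving_eval (fun _ : Fin n2 => gaussianReal 0 (σ ^ 2).toNNReal) j).comp
    (measurePreserving_eval (fun _ : Fin n1 => Measure.pi fun _ : Fin n2 =>
      gaussianReal 0 (σ ^ 2).toNNReal) i)

lemma integrable_noise_apply (σ : ℝ) (i : Fin n1) (j : Fin n2) :
    Integrable (fun ε : Fin n1 → Fin n2 → ℝ => ε i j) (noiseMeasure n1 n2 σ) :=
  (measurePreserving_noise_apply σ i j).integrable_comp_of_integrable
    ((memLp_id_gaussianReal 1).integrable le_rfl)

lemma integral_noise_apply (σ : ℝ) (i : Fin n1) (j : Fin n2) :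
    ∫ ε : Fin n1 → Fin n2 → ℝ, ε i j ∂noiseMeasure n1 n2 σ = 0 := by
  have h := measurePreserving_noise_apply (n1 := n1) (n2 := n2) σ i j
  have := integral_map (μ := noiseMeasure n1 n2 σ) (f := fun x : ℝ => x)
    h.measurable.aemeasurable aestronglyMeasurable_id
  rw [← this, h.map_eq, integral_id_gaussianReal]

lemma integrable_ip (σ : ℝ) (a : Fin n1 → Fin n2 → ℝ) :
    Integrable (fun ε => ip ε a) (noiseMeasure n1 n2 σ) :=
  integrable_finsetSum _ fun i _ => integrable_finsetSum _ fun j _ =>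
    (integrable_noise_apply σ i j).mul_const _

lemma integral_ip (σ : ℝ) (a : Fin n1 → Fin n2 → ℝ) :
    ∫ ε, ip ε a ∂noiseMeasure n1 n2 σ = 0 := by
  unfold ip
  rw [integral_finsetSum _ fun i _ => integrable_finsetSum _ fun j _ =>
    (integrable_noise_apply σ i j).mul_const _]
  refine Finset.sum_eq_zero fun i _ => ?_
  rw [integral_finsetSum _ fun j _ => (integrable_noise_apply σ i j).mul_const _]
  refine Finset.sum_eq_zero fun j _ => ?_
  rw [integral_mul_const, integral_noise_apply, zero_mul]

lemma integrable_isotonicSupport (σ : ℝ) :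
    Integrable isotonicSupport (noiseMeasure n1 n2 σ) := by
  refine Integrable.mono' (g := fun ε => ∑ i, ∑ j, |ε i j|)
    (integrable_finsetSum _ fun i _ => integrable_finsetSum _ fun j _ =>
      (integrable_noise_apply σ i j).abs)
    measurable_isotonicSupport.aestronglyMeasurable (ae_of_all _ fun ε => ?_)
  rw [Real.norm_of_nonneg (isotonicSupport_nonneg ε)]
  exact isotonicSupport_le_sum_abs ε

end

/-- **Inequality (fft) (reduction of the localized Gaussian width).** For every
isotonic `θ*` and `t ≥ 0`,
`E sup_{θ ∈ B(θ*,t)} ⟨ε, θ − θ*⟩ ≤ (t + sqrt(n V(θ*))) E sup_{θ ∈ B(0,1)} ⟨ε, θ⟩`,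
where `B(θ*,t) = {θ ∈ M : ‖θ − θ*‖ ≤ t}` and `ε` has i.i.d. `N(0,σ²)` entries. -/
theorem localized_gaussian_width_bound
    {n1 n2 : ℕ} (hn1 : 1 < n1) (hn2 : 1 < n2) (σ : ℝ) (hσ : 0 < σ)
    (θstar : Fin n1 → Fin n2 → ℝ) (hθstar : Isotonic θstar) (t : ℝ) (ht : 0 ≤ t) :
    (∫ ε, (⨆ θ : {θ : Fin n1 → Fin n2 → ℝ // Isotonic θ ∧ frobSq (θ - θstar) ≤ t ^ 2},
        ip ε (θ.1 - θstar)) ∂noiseMeasure n1 n2 σ) ≤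
      (t + Real.sqrt ((n1 * n2 : ℝ) * matVar θstar)) *
        ∫ ε, (⨆ θ : {θ : Fin n1 → Fin n2 → ℝ // Isotonic θ ∧ frobSq θ ≤ 1},
          ip ε θ.1) ∂noiseMeasure n1 n2 σ := by
  set c : Fin n1 → Fin n2 → ℝ := fun _ _ => (∑ i, ∑ j, θstar i j) / (n1 * n2)
  set s := √((n1 * n2 : ℝ) * matVar θstar) with hs
  have hn : (n1 * n2 : ℝ) ≠ 0 := by positivity
  have hvar : frobSq (θstar - c) = s ^ 2 := by
    have h : (n1 * n2 : ℝ) * matVar θstar = frobSq (θstar - c) := mul_div_cancel₀ _ hn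
    rw [hs, h, Real.sq_sqrt (frobSq_nonneg _)]
  have hs0 : 0 ≤ s := Real.sqrt_nonneg _
  have : Nonempty {θ : Fin n1 → Fin n2 → ℝ // Isotonic θ ∧ frobSq (θ - θstar) ≤ t ^ 2} :=
    ⟨θstar, hθstar, by rw [sub_self, frobSq_zero]; positivity⟩
  have hle : ∀ (ε θ : Fin n1 → Fin n2 → ℝ), Isotonic θ → frobSq (θ - θstar) ≤ t ^ 2 →
      ip ε (θ - θstar) ≤ (t + s) * isotonicSupport ε - ip ε (θstar - c) := by
    intro ε θ hθ hθt
    have h1 := frobSq_add_le ht hs0 hθt hvar.le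
    rw [sub_add_sub_cancel] at h1
    have h2 : Isotonic (θ - c) := fun i k j l hik hjl =>
      sub_le_sub_right (hθ hik hjl) _
    rw [← sub_sub_sub_cancel_right θ θstar c, ip_sub]
    exact sub_le_sub_right (ip_le_mul_isotonicSupport h2 (add_nonneg ht hs0) h1 ε) _
  calc _ ≤ ∫ ε, ((t + s) * isotonicSupport ε - ip ε (θstar - c)) ∂noiseMeasure n1 n2 σ := by
        refine integral_mono_of_nonneg (ae_of_all _ fun ε => ?_)
          (((integrable_isotonicSupport σ).const_mul _).sub (integrable_ip σ _))
          (ae_of_all _ fun ε => ciSup_le fun θ => hle ε θ.1 θ.2.1 θ.2.2)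
        refine le_ciSup_of_le ⟨_, Set.forall_mem_range.2 fun θ => hle ε θ.1 θ.2.1 θ.2.2⟩
          ⟨θstar, hθstar, by rw [sub_self, frobSq_zero]; positivity⟩ ?_
        simp [ip_zero]
    _ = (t + s) * ∫ ε, isotonicSupport ε ∂noiseMeasure n1 n2 σ := by
        rw [integral_sub ((integrable_isotonicSupport σ).const_mul _) (integrable_ip σ _),
          integral_const_mul, integral_ip, sub_zero]
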